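/- Let v be a nonzero vector in E*_rW. Then for 0 ≤ i ≤ d the vector E*_{r+i}A^i v is nonzero (hence spans the one-dimensional space E*_{r+i}W), and {E*_{r+i}A^i v}_{i=0}^d is a basis for W. Dually, for a nonzero u ∈ E_tW, each E_{t+i}(A*)^i u is nonzero and {E_{t+i}(A*)^i u}_{i=0}^d is a basis for W. -/

import Mathlib

open Matrix
open scoped Classical

noncomputable section

/-- The full setup: a `Q`-polynomial distance-regular graph `Γ = (X,R)` of diameter `D ≥ 3`,
with adjacency matrix `A`, primitive idempotents `E_i`, eigenvalues `θ_i`,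
Krein parameters `q^h_{ij}`, a fixed base vertex `x`, dual primitive idempotents `E*_i`,
dual adjacency matrix `A*` and dual eigenvalues `θ*_i`. -/
structure TSetup (X : Type*) [Fintype X] [DecidableEq X] where
  G : SimpleGraph X
  hGconn : G.Connected
  D : ℕ
  hD3 : 3 ≤ D
  hDiamLe : ∀ y z : X, G.dist y z ≤ D
  hDiamEq : ∃ y z : X, G.dist y z = D
  p : ℕ → ℕ → ℕ → ℕ
  hDRG : ∀ h i j : ℕ, h ≤ D → i ≤ D → j ≤ D → ∀ y z : X, G.dist y z = h →
    Nat.card {w : X // G.dist y w = i ∧ G.dist z w = j} = p h i j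
  A : Matrix X X ℂ
  hA : ∀ y z : X, A y z = if G.Adj y z then 1 else 0
  E : ℕ → Matrix X X ℂ
  hEzero : ∀ i : ℕ, D < i → E i = 0
  hEsum : ∑ i ∈ Finset.range (D + 1), E i = 1
  hEidem : ∀ i j : ℕ, i ≤ D → j ≤ D → E i * E j = if i = j then E i else 0
  hEsymm : ∀ i : ℕ, (E i)ᵀ = E i
  hEreal : ∀ i : ℕ, (E i).map (starRingEnd ℂ) = E i
  hE0 : E 0 = (Fintype.card X : ℂ)⁻¹ • Matrix.of (fun _ _ => (1 : ℂ))
  θ : ℕ → ℝ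
  hθinj : ∀ i j : ℕ, i ≤ D → j ≤ D → θ i = θ j → i = j
  hAspec : A = ∑ i ∈ Finset.range (D + 1), (θ i : ℂ) • E i
  q : ℕ → ℕ → ℕ → ℝ
  hKrein : ∀ i j : ℕ, i ≤ D → j ≤ D →
    Matrix.hadamard (E i) (E j) =
      (Fintype.card X : ℂ)⁻¹ • ∑ h ∈ Finset.range (D + 1), (q h i j : ℂ) • E h
  hQpoly0 : ∀ h i j : ℕ, h ≤ D → i ≤ D → j ≤ D →
    (i + j < h ∨ h + j < i ∨ h + i < j) → q h i j = 0
  hQpoly1 : ∀ h i j : ℕ, h ≤ D → i ≤ D → j ≤ D →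
    (h = i + j ∨ i = h + j ∨ j = h + i) → q h i j ≠ 0
  x : X
  Estar : ℕ → Matrix X X ℂ
  hEstarzero : ∀ i : ℕ, D < i → Estar i = 0
  hEstar : ∀ i : ℕ, i ≤ D → ∀ y z : X,
    Estar i y z = if y = z ∧ G.dist x y = i then 1 else 0
  Astar : Matrix X X ℂ
  hAstar : ∀ y z : X, Astar y z = if y = z then (Fintype.card X : ℂ) * E 1 x y else 0
  θstar : ℕ → ℝ
  hθstarinj : ∀ i j : ℕ, i ≤ D → j ≤ D → θstar i = θstar j → i = j
  hAstarspec : Astar = ∑ i ∈ Finset.range (D + 1), (θstar i : ℂ) • Estar i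

variable {X : Type*} [Fintype X] [DecidableEq X]

/-- The Terwilliger algebra `T = T(x)`, generated by `A` and `A*`. -/
def TSetup.T (S : TSetup X) : Subalgebra ℂ (Matrix X X ℂ) :=
  Algebra.adjoin ℂ {S.A, S.Astar}

/-- A thin irreducible `T`-module `W` with endpoint `r`, dual endpoint `t` and diameter `d`,
where `E*_i W ≠ 0` iff `r ≤ i ≤ r + d` and `E_i W ≠ 0` iff `t ≤ i ≤ t + d`. -/
structure TMod (S : TSetup X) where
  W : Submodule ℂ (X → ℂ)
  hWinv : ∀ B ∈ S.T, ∀ w ∈ W, B *ᵥ w ∈ W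
  hWne : W ≠ ⊥
  hWirr : ∀ U : Submodule ℂ (X → ℂ), U ≤ W →
    (∀ B ∈ S.T, ∀ w ∈ U, B *ᵥ w ∈ U) → U = ⊥ ∨ U = W
  hthin : ∀ i : ℕ, Module.finrank ℂ (W.map (S.Estar i).mulVecLin) ≤ 1
  r : ℕ
  t : ℕ
  d : ℕ
  hr : ∀ i : ℕ, W.map (S.Estar i).mulVecLin ≠ ⊥ ↔ r ≤ i ∧ i ≤ r + d
  ht : ∀ i : ℕ, W.map (S.E i).mulVecLin ≠ ⊥ ↔ t ≤ i ∧ i ≤ t + d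

open Classical in
/-- The action of a matrix `B` on `W` (the restriction of `B` to `W`; defined to be `0`
if `B` does not leave `W` invariant). -/
def actW (S : TSetup X) (M : TMod S) (B : Matrix X X ℂ) : M.W →ₗ[ℂ] M.W :=
  if h : ∀ w ∈ M.W, B.mulVecLin w ∈ M.W then B.mulVecLin.restrict h else 0

/-- `tr_W(B)`: the trace of the action of `B` on `W`. -/
def trW (S : TSetup X) (M : TMod S) (B : Matrix X X ℂ) : ℂ :=
  LinearMap.trace ℂ M.W (actW S M B)

/-- `a_i(W) = tr_W(E*_{r+i} A)`. -/
def aW (S : TSetup X) (M : TMod S) (i : ℕ) : ℂ :=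
  trW S M (S.Estar (M.r + i) * S.A)

/-- `x_i(W) = tr_W(E*_{r+i} A E*_{r+i-1} A)`, with `x_0(W) = 0`. -/
def xW (S : TSetup X) (M : TMod S) (i : ℕ) : ℂ :=
  if i = 0 then 0 else trW S M (S.Estar (M.r + i) * S.A * S.Estar (M.r + i - 1) * S.A)

/-- `a*_i(W) = tr_W(E_{t+i} A*)`. -/
def astarW (S : TSetup X) (M : TMod S) (i : ℕ) : ℂ :=
  trW S M (S.E (M.t + i) * S.Astar)

/-- `x*_i(W) = tr_W(E_{t+i} A* E_{t+i-1} A*)`, with `x*_0(W) = 0`. -/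
def xstarW (S : TSetup X) (M : TMod S) (i : ℕ) : ℂ :=
  if i = 0 then 0 else trW S M (S.E (M.t + i) * S.Astar * S.E (M.t + i - 1) * S.Astar)

/-- The polynomials `p_i`: `p_0 = 1`, `p_{-1} = 0`,
`λ p_i = p_{i+1} + a_i(W) p_i + x_i(W) p_{i-1}`. -/
def pW (S : TSetup X) (M : TMod S) : ℕ → Polynomial ℂ
  | 0 => 1
  | 1 => Polynomial.X - Polynomial.C (aW S M 0)
  | (n + 2) =>
      (Polynomial.X - Polynomial.C (aW S M (n + 1))) * pW S M (n + 1)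
        - Polynomial.C (xW S M (n + 1)) * pW S M n

/-- The polynomials `p*_i`: `p*_0 = 1`, `p*_{-1} = 0`,
`λ p*_i = p*_{i+1} + a*_i(W) p*_i + x*_i(W) p*_{i-1}`. -/
def pstarW (S : TSetup X) (M : TMod S) : ℕ → Polynomial ℂ
  | 0 => 1
  | 1 => Polynomial.X - Polynomial.C (astarW S M 0)
  | (n + 2) =>
      (Polynomial.X - Polynomial.C (astarW S M (n + 1))) * pstarW S M (n + 1)
        - Polynomial.C (xstarW S M (n + 1)) * pstarW S M n

/-- The Hermitian inner product `⟨u,v⟩ = Σ_y u_y conj(v_y)` on `ℂ^X`. -/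
def herm (u v : X → ℂ) : ℂ := ∑ y, u y * (starRingEnd ℂ) (v y)

/-- `ν(W)`, the multiplicative inverse of `m_0(W) = tr_W(E_t E*_r)`. -/
def nuW (S : TSetup X) (M : TMod S) : ℂ :=
  (trW S M (S.E M.t * S.Estar M.r))⁻¹

/-- `k_i(W) = ν(W) m*_i(W)` where `m*_i(W) = tr_W(E*_{r+i} E_t)`. -/
def kW (S : TSetup X) (M : TMod S) (i : ℕ) : ℂ :=
  nuW S M * trW S M (S.Estar (M.r + i) * S.E M.t)

/-- `k*_i(W) = ν(W) m_i(W)` where `m_i(W) = tr_W(E_{t+i} E*_r)`. -/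
def kstarW (S : TSetup X) (M : TMod S) (i : ℕ) : ℂ :=
  nuW S M * trW S M (S.E (M.t + i) * S.Estar M.r)

/-! Let `F₀, F₁, …` be the projections of a module onto the summands of a grading, and let `A` raise
degrees by at most one, so that `A` maps the span of the degrees `< k` into the span of the
degrees `< k + 1`. If `W` is thin and irreducible under `A` and all `Fᵢ`, and `u ≠ 0` has degree `k`
below the top of `W`, then `F_{k+1} A u ≠ 0`: otherwise the part of `W` in degrees `≤ k` would be
a proper nonzero submodule. By induction `F_{r+i} Aⁱ v ≠ 0`, where only the component of `Aⁱ v` of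
top degree matters, and thinness turns these vectors into a basis.

For `F = E*` the raising property is the triangle inequality. For `F = E` it is the vanishing
of Krein parameters, since `‖E_i A* E_j‖² = tr (A* E_i A* E_j)` is a multiple of `q¹_{ij}`. Thinness
with respect to `E` is inherited from `E*`: the vectors `Aⁿ v` span `W` and `E_i Aⁿ v = θ_iⁿ E_i v`.
-/

section Idempotents

variable {ι K R : Type*}

lemma sum_smul_mul_of_orthogonalIdempotents [CommSemiring K] [Semiring R] [Algebra K R]
    {e : ι → R} (he : OrthogonalIdempotents e) (θ : ι → K) {s : Finset ι} {j : ι} (hj : j ∈ s) :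
    (∑ i ∈ s, θ i • e i) * e j = θ j • e j := by
  simp [Finset.sum_mul, he.mul_eq, hj]

lemma mul_sum_smul_of_orthogonalIdempotents [CommSemiring K] [Semiring R] [Algebra K R]
    {e : ι → R} (he : OrthogonalIdempotents e) (θ : ι → K) {s : Finset ι} {j : ι} (hj : j ∈ s) :
    e j * (∑ i ∈ s, θ i • e i) = θ j • e j := by
  simp [Finset.mul_sum, he.mul_eq, hj]

lemma eq_zero_of_sum_eq_one_of_notMem [Semiring R] {e : ι → R} (he : OrthogonalIdempotents e)
    {s : Finset ι} (hs : ∑ i ∈ s, e i = 1) {j : ι} (hj : j ∉ s) : e j = 0 := by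
  rw [← mul_one (e j), ← hs, he.mul_sum_of_notMem hj]

lemma aeval_mul_eq_eval_smul [CommSemiring K] [Semiring R] [Algebra K R] {a e : R} {c : K}
    (h : a * e = c • e) (p : Polynomial K) : Polynomial.aeval a p * e = p.eval c • e := by
  induction p using Polynomial.induction_on with
  | C k => simp [Algebra.smul_def]
  | add p q hp hq => simp [add_mul, add_smul, hp, hq]
  | monomial n k ih =>
    calc Polynomial.aeval a (.C k * .X ^ (n + 1)) * e
        = Polynomial.aeval a (.C k * .X ^ n) * (a * e) := by simp [pow_succ, mul_assoc]
      _ = c • (Polynomial.C k * .X ^ n).eval c • e := by rw [h, mul_smul_comm, ih]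
      _ = (Polynomial.C k * .X ^ (n + 1)).eval c • e := by
        rw [smul_smul, pow_succ, ← mul_assoc, Polynomial.eval_mul_X, mul_comm c]

lemma mem_adjoin_sum_smul_of_orthogonalIdempotents [Field K] [Ring R] [Algebra K R] {e : ι → R}
    (he : OrthogonalIdempotents e) {s : Finset ι} (hs : ∑ i ∈ s, e i = 1) {θ : ι → K}
    (hθ : Set.InjOn θ s) (j : ι) : e j ∈ Algebra.adjoin K {∑ i ∈ s, θ i • e i} := by
  by_cases hj : j ∈ s
  · suffices h : Polynomial.aeval (∑ i ∈ s, θ i • e i) (Lagrange.basis s θ j) = e j from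
      h ▸ Polynomial.aeval_mem_adjoin_singleton K _
    have aeval_mul (i : ι) (hi : i ∈ s) :=
      aeval_mul_eq_eval_smul (sum_smul_mul_of_orthogonalIdempotents he θ hi) (Lagrange.basis s θ j)
    rw [← mul_one (Polynomial.aeval _ _), ← hs, Finset.mul_sum, Finset.sum_eq_single_of_mem j hj]
    · rw [aeval_mul j hj, Lagrange.eval_basis_self hθ hj, one_smul]
    · intro i hi hij
      rw [aeval_mul i hi, Lagrange.eval_basis_of_ne hij.symm hi, zero_smul]
  · rw [eq_zero_of_sum_eq_one_of_notMem he hs hj]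
    exact zero_mem _

lemma linearIndependent_of_orthogonalIdempotents {V : Type*} [DivisionRing K] [AddCommGroup V]
    [Module K V] {e : ι → Module.End K V} (he : OrthogonalIdempotents e) {u : ι → V}
    (hu : ∀ i, e i (u i) = u i) (hu0 : ∀ i, u i ≠ 0) : LinearIndependent K u := by
  rw [linearIndependent_iff']
  intro s g hg i hi
  have apply_u (j : ι) : e i (u j) = if i = j then u i else 0 := by
    rw [← hu j, ← Module.End.mul_apply, he.mul_eq]
    split_ifs with hij
    · rw [hij, hu]
    · rfl
  have hgi : g i • u i = 0 := by simpa [apply_u, hi] using congrArg (e i) hg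
  exact (smul_eq_zero.1 hgi).resolve_right (hu0 i)

end Idempotents

section Submodules

lemma span_singleton_eq_of_isPrincipal {K V : Type*} [DivisionRing K] [AddCommGroup V] [Module K V]
    {P : Submodule K V} (hP : P.IsPrincipal) {u : V} (hu : u ∈ P) (hu0 : u ≠ 0) :
    Submodule.span K {u} = P := by
  obtain ⟨g, rfl⟩ := hP
  obtain ⟨c, rfl⟩ := Submodule.mem_span_singleton.1 hu
  have hc : c ≠ 0 := fun hc ↦ hu0 (by rw [hc, zero_smul])
  exact Submodule.span_singleton_smul_eq hc.isUnit g

lemma mem_invtSubmodule_of_mem_adjoin {K R V : Type*} [CommSemiring K] [Semiring R] [Algebra K R]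
    [AddCommMonoid V] [Module K V] (φ : R →ₐ[K] Module.End K V) {s : Set R} {U : Submodule K V}
    (hU : ∀ b ∈ s, U ∈ (φ b).invtSubmodule) {b : R} (hb : b ∈ Algebra.adjoin K s) :
    U ∈ (φ b).invtSubmodule := by
  induction hb using Algebra.adjoin_induction with
  | mem b hb => exact hU b hb
  | algebraMap c =>
    intro w hw
    simpa [Module.algebraMap_end_apply] using U.smul_mem c hw
  | add a b _ _ ha hb =>
    intro w hw
    simpa using U.add_mem (ha hw) (hb hw)
  | mul a b _ _ ha hb =>
    intro w hw
    simpa using ha (hb hw)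

lemma pow_apply_mem_of_mem_invtSubmodule {R V : Type*} [Semiring R] [AddCommMonoid V] [Module R V]
    {A : Module.End R V} {U : Submodule R V} (hU : U ∈ A.invtSubmodule) {v : V} (hv : v ∈ U)
    (n : ℕ) : (A ^ n) v ∈ U := by
  rw [Module.End.pow_apply]
  exact Set.MapsTo.iterate (f := A) (s := U) hU n hv

lemma mem_invtSubmodule_mulVecLin_sum_smul {ι n R : Type*} [Fintype n] [CommSemiring R]
    {F : ι → Matrix n n R} {U : Submodule R (n → R)}
    (hU : ∀ i, U ∈ Module.End.invtSubmodule (F i).mulVecLin) (c : ι → R) (s : Finset ι) :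
    U ∈ Module.End.invtSubmodule (∑ i ∈ s, c i • F i).mulVecLin := by
  intro w hw
  rw [Submodule.mem_comap, Matrix.mulVecLin_apply, Matrix.sum_mulVec]
  refine sum_mem fun i _ ↦ ?_
  rw [Matrix.smul_mulVec]
  exact U.smul_mem _ (hU i hw)

end Submodules

section Hessenberg

variable {R V : Type*} [Ring R] [AddCommGroup V] [Module R V]
  {A : Module.End R V} {F : ℕ → Module.End R V} {s : Finset ℕ} {k : ℕ} {w : V}

/-- For projections `F₀, F₁, …` onto the summands of a grading, the flag of the sums of the
summands of degree strictly below `k`, described as the common kernel of the other projections. -/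
def gradedFlag (F : ℕ → Module.End R V) (k : ℕ) : Submodule R V :=
  ⨅ j ≥ k, LinearMap.ker (F j)

lemma mem_gradedFlag : w ∈ gradedFlag F k ↔ ∀ j ≥ k, F j w = 0 := by
  simp [gradedFlag]

lemma mem_gradedFlag_iff_succ : w ∈ gradedFlag F k ↔ F k w = 0 ∧ w ∈ gradedFlag F (k + 1) := by
  simp only [mem_gradedFlag]
  refine ⟨fun h ↦ ⟨h k le_rfl, fun j hj ↦ h j (by lia)⟩, fun h j hj ↦ ?_⟩
  obtain rfl | hj := hj.eq_or_lt
  exacts [h.1, h.2 j hj]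

/-- `F` consists of the projections onto the summands of a grading with degrees in the finite set
`s`, and with respect to this grading `A` is a block upper Hessenberg matrix: it raises
degrees by at most one. -/
structure IsHessenberg (A : Module.End R V) (F : ℕ → Module.End R V) (s : Finset ℕ) : Prop where
  orthogonalIdempotents : OrthogonalIdempotents F
  sum_eq_one : ∑ i ∈ s, F i = 1
  mul_mul_eq_zero : ∀ i j, i + 1 < j → F j * A * F i = 0

namespace IsHessenberg

lemma proj_proj (hA : IsHessenberg A F s) (i j : ℕ) (w : V) :
    F i (F j w) = if i = j then F i w else 0 := by
  rw [← Module.End.mul_apply, hA.orthogonalIdempotents.mul_eq]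
  split_ifs <;> rfl

lemma sum_proj (hA : IsHessenberg A F s) (w : V) : ∑ i ∈ s, F i w = w := by
  rw [← LinearMap.sum_apply, hA.sum_eq_one, Module.End.one_apply]

lemma proj_mem_gradedFlag (hA : IsHessenberg A F s) (k : ℕ) (w : V) :
    F k w ∈ gradedFlag F (k + 1) :=
  mem_gradedFlag.2 fun j hj ↦ by rw [hA.proj_proj, if_neg (by lia)]

lemma gradedFlag_mem_invtSubmodule (hA : IsHessenberg A F s) (i k : ℕ) :
    gradedFlag F k ∈ (F i).invtSubmodule := by
  intro w hw
  refine mem_gradedFlag.2 fun j hj ↦ ?_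
  rw [hA.proj_proj, mem_gradedFlag.1 hw j hj, ite_self]

lemma sub_proj_mem_gradedFlag (hA : IsHessenberg A F s) (hw : w ∈ gradedFlag F (k + 1)) :
    w - F k w ∈ gradedFlag F k :=
  mem_gradedFlag_iff_succ.2
    ⟨by rw [map_sub, hA.proj_proj, if_pos rfl, sub_self],
      sub_mem hw (hA.proj_mem_gradedFlag k w)⟩

lemma apply_mem_gradedFlag (hA : IsHessenberg A F s) (hw : w ∈ gradedFlag F k) :
    A w ∈ gradedFlag F (k + 1) := by
  refine mem_gradedFlag.2 fun j hj ↦ ?_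
  rw [← hA.sum_proj w, map_sum, map_sum]
  refine Finset.sum_eq_zero fun i _ ↦ ?_
  obtain hik | hki := lt_or_ge i k
  · exact LinearMap.congr_fun (hA.mul_mul_eq_zero i j (by lia)) w
  · rw [mem_gradedFlag.1 hw i hki, map_zero, map_zero]

lemma pow_apply_mem_gradedFlag (hA : IsHessenberg A F s) {v : V} {r : ℕ} {W : Submodule R V}
    (hv : v ∈ W.map (F r)) (n : ℕ) : (A ^ n) v ∈ gradedFlag F (r + n + 1) := by
  induction n with
  | zero =>
    obtain ⟨w, -, rfl⟩ := hv
    exact hA.proj_mem_gradedFlag r w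
  | succ n ih =>
    rw [pow_succ', Module.End.mul_apply]
    exact hA.apply_mem_gradedFlag ih

lemma proj_succ_apply (hA : IsHessenberg A F s) (hw : w ∈ gradedFlag F (k + 1)) :
    F (k + 1) (A w) = F (k + 1) (A (F k w)) := by
  have h := mem_gradedFlag.1 (hA.apply_mem_gradedFlag (hA.sub_proj_mem_gradedFlag hw)) _ le_rfl
  rwa [map_sub, map_sub, sub_eq_zero] at h

end IsHessenberg

end Hessenberg

section ThinIrreducible

variable {K V : Type*} [DivisionRing K] [AddCommGroup V] [Module K V]
  {A : Module.End K V} {F : ℕ → Module.End K V} {s : Finset ℕ}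
  {W : Submodule K V} {r d i k : ℕ} {u v w : V}

/-- `W` is an irreducible module for the algebra generated by `A` and all `Fᵢ`, is thin (the
components `Fᵢ W` are at most one-dimensional), and has endpoint `r` and diameter `d`. Thinness is
expressed by `Submodule.IsPrincipal` because `Module.finrank` vanishes in infinite dimension. -/
structure IsThinIrreducible (A : Module.End K V) (F : ℕ → Module.End K V) (W : Submodule K V)
    (r d : ℕ) : Prop where
  mem_invtSubmodule : W ∈ A.invtSubmodule
  mem_invtSubmodule_proj : ∀ i, W ∈ (F i).invtSubmodule
  eq_bot_or_eq : ∀ U ≤ W, U ∈ A.invtSubmodule → (∀ i, U ∈ (F i).invtSubmodule) → U = ⊥ ∨ U = W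
  isPrincipal_map_proj : ∀ i, (W.map (F i)).IsPrincipal
  map_proj_ne_bot_iff : ∀ i, W.map (F i) ≠ ⊥ ↔ r ≤ i ∧ i ≤ r + d

namespace IsThinIrreducible

lemma mem_of_mem_map_proj (hW : IsThinIrreducible A F W r d) (hv : v ∈ W.map (F i)) : v ∈ W := by
  obtain ⟨w, hw, rfl⟩ := hv
  exact hW.mem_invtSubmodule_proj i hw

lemma pow_apply_mem (hW : IsThinIrreducible A F W r d) (hv : v ∈ W.map (F i)) (n : ℕ) :
    (A ^ n) v ∈ W :=
  pow_apply_mem_of_mem_invtSubmodule hW.mem_invtSubmodule (hW.mem_of_mem_map_proj hv) n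

lemma proj_eq_zero (hW : IsThinIrreducible A F W r d) (hw : w ∈ W) (hi : ¬ (r ≤ i ∧ i ≤ r + d)) :
    F i w = 0 := by
  have hbot : W.map (F i) = ⊥ := not_not.1 ((hW.map_proj_ne_bot_iff i).not.2 hi)
  exact LinearMap.le_ker_iff_map.2 hbot hw

lemma proj_succ_apply_ne_zero (hA : IsHessenberg A F s) (hW : IsThinIrreducible A F W r d)
    (hrk : r ≤ k) (hkd : k < r + d) (hu : u ∈ W.map (F k)) (hu0 : u ≠ 0) :
    F (k + 1) (A u) ≠ 0 := by
  intro hAu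
  have proj_apply_proj (w : V) (hw : w ∈ W) : F (k + 1) (A (F k w)) = 0 := by
    have hmem : F k w ∈ Submodule.span K {u} :=
      span_singleton_eq_of_isPrincipal (hW.isPrincipal_map_proj k) hu hu0 ▸
        Submodule.mem_map_of_mem hw
    obtain ⟨c, hc⟩ := Submodule.mem_span_singleton.1 hmem
    rw [← hc, map_smul, map_smul, hAu, smul_zero]
  have invt_A : W ⊓ gradedFlag F (k + 1) ∈ A.invtSubmodule := fun w ⟨hwW, hwF⟩ ↦
    ⟨hW.mem_invtSubmodule hwW, mem_gradedFlag_iff_succ.2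
      ⟨(hA.proj_succ_apply hwF).trans (proj_apply_proj w hwW), hA.apply_mem_gradedFlag hwF⟩⟩
  have invt_proj (i : ℕ) : W ⊓ gradedFlag F (k + 1) ∈ (F i).invtSubmodule :=
    Module.End.invtSubmodule.inf_mem (hW.mem_invtSubmodule_proj i)
      (hA.gradedFlag_mem_invtSubmodule i (k + 1))
  obtain hbot | htop := hW.eq_bot_or_eq _ inf_le_left invt_A invt_proj
  · have hu' : u ∈ W ⊓ gradedFlag F (k + 1) := by
      obtain ⟨w, hw, rfl⟩ := hu
      exact ⟨hW.mem_invtSubmodule_proj k hw, hA.proj_mem_gradedFlag k w⟩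
    rw [hbot, Submodule.mem_bot] at hu'
    exact hu0 hu'
  · refine (hW.map_proj_ne_bot_iff (k + 1)).2 (by lia) (LinearMap.le_ker_iff_map.1 ?_)
    intro w hw
    exact mem_gradedFlag.1 (inf_eq_left.1 htop hw) _ le_rfl

lemma proj_pow_apply_ne_zero (hA : IsHessenberg A F s) (hW : IsThinIrreducible A F W r d)
    (hv : v ∈ W.map (F r)) (hv0 : v ≠ 0) (hi : i ≤ d) : F (r + i) ((A ^ i) v) ≠ 0 := by
  induction i with
  | zero =>
    obtain ⟨w, -, rfl⟩ := hv
    simpa [hA.proj_proj] using hv0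
  | succ n ih =>
    rw [pow_succ', Module.End.mul_apply, ← add_assoc,
      hA.proj_succ_apply (hA.pow_apply_mem_gradedFlag hv n)]
    exact hW.proj_succ_apply_ne_zero hA (by lia) (by lia)
      (Submodule.mem_map_of_mem (hW.pow_apply_mem hv n)) (ih (by lia))

lemma span_singleton_proj_pow_apply (hA : IsHessenberg A F s) (hW : IsThinIrreducible A F W r d)
    (hv : v ∈ W.map (F r)) (hv0 : v ≠ 0) (hi : i ≤ d) :
    Submodule.span K {F (r + i) ((A ^ i) v)} = W.map (F (r + i)) :=
  span_singleton_eq_of_isPrincipal (hW.isPrincipal_map_proj (r + i))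
    (Submodule.mem_map_of_mem (hW.pow_apply_mem hv i))
    (hW.proj_pow_apply_ne_zero hA hv hv0 hi)

lemma linearIndependent_proj_pow_apply (hA : IsHessenberg A F s)
    (hW : IsThinIrreducible A F W r d) (hv : v ∈ W.map (F r)) (hv0 : v ≠ 0) :
    LinearIndependent K (fun i : Fin (d + 1) ↦ F (r + i) ((A ^ (i : ℕ)) v)) :=
  linearIndependent_of_orthogonalIdempotents
    (hA.orthogonalIdempotents.embedding (Fin.valEmbedding.trans (addLeftEmbedding r)))
    (fun i ↦ by simp [hA.proj_proj])
    (fun i ↦ hW.proj_pow_apply_ne_zero hA hv hv0 (Nat.le_of_lt_succ i.isLt))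

lemma span_range_proj_pow_apply (hA : IsHessenberg A F s) (hW : IsThinIrreducible A F W r d)
    (hv : v ∈ W.map (F r)) (hv0 : v ≠ 0) :
    Submodule.span K (Set.range fun i : Fin (d + 1) ↦ F (r + i) ((A ^ (i : ℕ)) v)) = W := by
  refine le_antisymm (Submodule.span_le.2 ?_) fun w hw ↦ ?_
  · rintro _ ⟨i, rfl⟩
    exact hW.mem_invtSubmodule_proj _ (hW.pow_apply_mem hv i)
  · rw [← hA.sum_proj w]
    refine sum_mem fun j _ ↦ ?_
    by_cases hj : r ≤ j ∧ j ≤ r + d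
    · obtain ⟨i, rfl⟩ := Nat.exists_eq_add_of_le hj.1
      have hid : i ≤ d := by lia
      have hmem : F (r + i) w ∈ Submodule.span K {F (r + i) ((A ^ i) v)} :=
        hW.span_singleton_proj_pow_apply hA hv hv0 hid ▸ Submodule.mem_map_of_mem hw
      refine Submodule.span_mono (Set.singleton_subset_iff.2 ?_) hmem
      exact ⟨⟨i, Nat.lt_succ_of_le hid⟩, rfl⟩
    · rw [hW.proj_eq_zero hw hj]
      exact zero_mem _

lemma inf_gradedFlag_endpoint (hA : IsHessenberg A F s) (hW : IsThinIrreducible A F W r d) :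
    W ⊓ gradedFlag F r = ⊥ := by
  refine (Submodule.eq_bot_iff _).2 fun w ⟨hwW, hwF⟩ ↦ ?_
  rw [← hA.sum_proj w]
  refine Finset.sum_eq_zero fun j _ ↦ ?_
  obtain hjr | hrj := lt_or_ge j r
  · exact hW.proj_eq_zero hwW (by lia)
  · exact mem_gradedFlag.1 hwF j hrj

lemma le_of_mem_invtSubmodule (hA : IsHessenberg A F s) (hW : IsThinIrreducible A F W r d)
    (hv : v ∈ W.map (F r)) (hv0 : v ≠ 0) {U : Submodule K V} (hU : U ∈ A.invtSubmodule)
    (hvU : v ∈ U) : W ≤ U := by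
  have inf_gradedFlag_le (i : ℕ) (hi : i ≤ d + 1) : W ⊓ gradedFlag F (r + i) ≤ U := by
    induction i with
    | zero => exact (hW.inf_gradedFlag_endpoint hA).le.trans bot_le
    | succ n ih =>
      intro w ⟨hwW, hwF⟩
      have hmem : F (r + n) w ∈ Submodule.span K {F (r + n) ((A ^ n) v)} :=
        hW.span_singleton_proj_pow_apply hA hv hv0 (i := n) (by lia) ▸
          Submodule.mem_map_of_mem hwW
      obtain ⟨c, hc⟩ := Submodule.mem_span_singleton.1 hmem
      have hdiff : w - c • (A ^ n) v ∈ W ⊓ gradedFlag F (r + n) :=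
        ⟨sub_mem hwW (W.smul_mem c (hW.pow_apply_mem hv n)),
          mem_gradedFlag_iff_succ.2 ⟨by rw [map_sub, map_smul, hc, sub_self],
            sub_mem hwF (Submodule.smul_mem _ c (hA.pow_apply_mem_gradedFlag hv n))⟩⟩
      have hpow : (A ^ n) v ∈ U := pow_apply_mem_of_mem_invtSubmodule hU hvU n
      exact (U.sub_mem_iff_left (U.smul_mem c hpow)).1 (ih (by lia) hdiff)
  refine fun w hw ↦ inf_gradedFlag_le (d + 1) le_rfl ⟨hw, mem_gradedFlag.2 fun j hj ↦ ?_⟩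
  exact hW.proj_eq_zero hw (by lia)

lemma isPrincipal_map_of_apply_eq_smul (hA : IsHessenberg A F s)
    (hW : IsThinIrreducible A F W r d) {V' : Type*} [AddCommGroup V'] [Module K V']
    {G : V →ₗ[K] V'} {c : K} (hG : ∀ w, G (A w) = c • G w) : (W.map G).IsPrincipal := by
  obtain ⟨v, hv, hv0⟩ :=
    Submodule.exists_mem_ne_zero_of_ne_bot ((hW.map_proj_ne_bot_iff r).2 ⟨le_rfl, by lia⟩)
  have invt : (Submodule.span K {G v}).comap G ∈ A.invtSubmodule := by
    intro w hw
    rw [Submodule.mem_comap, Submodule.mem_comap, hG]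
    exact Submodule.smul_mem _ c hw
  have hW_le : W ≤ (Submodule.span K {G v}).comap G :=
    hW.le_of_mem_invtSubmodule hA hv hv0 invt (Submodule.mem_span_singleton_self (G v))
  have hvW : G v ∈ W.map G := Submodule.mem_map_of_mem (hW.mem_of_mem_map_proj hv)
  exact ⟨G v, le_antisymm (Submodule.map_le_iff_le_comap.2 hW_le)
    ((Submodule.span_singleton_le_iff_mem _ _).2 hvW)⟩

end IsThinIrreducible

end ThinIrreducible

section Matrices

lemma isHessenberg_mulVecLin {n R : Type*} [Fintype n] [DecidableEq n] [CommRing R]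
    {A : Matrix n n R} {F : ℕ → Matrix n n R} {s : Finset ℕ} (hF : OrthogonalIdempotents F)
    (hs : ∑ i ∈ s, F i = 1) (hA : ∀ i j, i + 1 < j → F j * A * F i = 0) :
    IsHessenberg A.mulVecLin (fun i ↦ (F i).mulVecLin) s where
  orthogonalIdempotents := hF.map (Matrix.toLinAlgEquiv' : Matrix n n R ≃ₐ[R] _).toRingHom
  sum_eq_one := by
    change ∑ i ∈ s, Matrix.toLinAlgEquiv' (F i) = 1
    rw [← map_sum, hs, map_one]
  mul_mul_eq_zero i j hij := by
    rw [Module.End.mul_eq_comp, Module.End.mul_eq_comp, ← Matrix.mulVecLin_mul,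
      ← Matrix.mulVecLin_mul, hA i j hij, Matrix.mulVecLin_zero]

theorem IsThinIrreducible.mulVec_basis {n K : Type*} [Fintype n] [DecidableEq n] [Field K]
    {A : Matrix n n K} {F : ℕ → Matrix n n K} {s : Finset ℕ} {W : Submodule K (n → K)} {r d : ℕ}
    {v : n → K} (hA : IsHessenberg A.mulVecLin (fun i ↦ (F i).mulVecLin) s)
    (hW : IsThinIrreducible A.mulVecLin (fun i ↦ (F i).mulVecLin) W r d)
    (hv : v ∈ W.map (F r).mulVecLin) (hv0 : v ≠ 0) :
    (∀ i ≤ d, F (r + i) *ᵥ (A ^ i *ᵥ v) ≠ 0 ∧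
      Submodule.span K {F (r + i) *ᵥ (A ^ i *ᵥ v)} = W.map (F (r + i)).mulVecLin) ∧
    LinearIndependent K (fun i : Fin (d + 1) ↦ F (r + i) *ᵥ (A ^ (i : ℕ) *ᵥ v)) ∧
    Submodule.span K (Set.range fun i : Fin (d + 1) ↦ F (r + i) *ᵥ (A ^ (i : ℕ) *ᵥ v)) = W := by
  have proj_pow (i : ℕ) :
      (F (r + i)).mulVecLin ((A.mulVecLin ^ i) v) = F (r + i) *ᵥ (A ^ i *ᵥ v) := by
    rw [← Matrix.toLin'_apply' A, ← Matrix.toLin'_pow, Matrix.toLin'_apply, Matrix.mulVecLin_apply]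
  have ne_zero (i : ℕ) (hi : i ≤ d) := hW.proj_pow_apply_ne_zero hA hv hv0 hi
  have span_singleton (i : ℕ) (hi : i ≤ d) := hW.span_singleton_proj_pow_apply hA hv hv0 hi
  have linearIndependent := hW.linearIndependent_proj_pow_apply hA hv hv0
  have span_range := hW.span_range_proj_pow_apply hA hv hv0
  simp only [proj_pow] at ne_zero span_singleton linearIndependent span_range
  exact ⟨fun i hi ↦ ⟨ne_zero i hi, span_singleton i hi⟩, linearIndependent, span_range⟩

end Matrices

namespace TSetup

lemma orthogonalIdempotents_E (S : TSetup X) : OrthogonalIdempotents S.E := by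
  refine OrthogonalIdempotents.iff_mul_eq.2 fun i j ↦ ?_
  by_cases hi : i ≤ S.D
  · by_cases hj : j ≤ S.D
    · exact S.hEidem i j hi hj
    · rw [S.hEzero j (by lia), if_neg (by lia), mul_zero]
  · simp [S.hEzero i (by lia)]

lemma Estar_eq_diagonal (S : TSetup X) (i : ℕ) :
    S.Estar i = Matrix.diagonal fun y ↦ if S.G.dist S.x y = i then 1 else 0 := by
  ext y z
  by_cases hi : i ≤ S.D
  · rw [S.hEstar i hi, Matrix.diagonal_apply, ite_and]
  · have hdist : S.G.dist S.x y ≠ i := ((S.hDiamLe S.x y).trans_lt (not_le.1 hi)).ne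
    simp [S.hEstarzero i (not_le.1 hi), Matrix.diagonal_apply, hdist]

lemma orthogonalIdempotents_Estar (S : TSetup X) : OrthogonalIdempotents S.Estar := by
  refine OrthogonalIdempotents.iff_mul_eq.2 fun i j ↦ ?_
  ext y z
  simp only [Estar_eq_diagonal, Matrix.diagonal_mul_diagonal, Matrix.diagonal_apply]
  split_ifs <;> simp_all

lemma sum_Estar (S : TSetup X) : ∑ i ∈ Finset.range (S.D + 1), S.Estar i = 1 := by
  ext y z
  have hy : S.G.dist S.x y < S.D + 1 := Nat.lt_succ_of_le (S.hDiamLe S.x y)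
  simp only [Estar_eq_diagonal, Matrix.sum_apply, Matrix.diagonal_apply, Matrix.one_apply]
  split_ifs
  · rw [Finset.sum_ite_eq, if_pos (Finset.mem_range.2 hy)]
  · exact Finset.sum_const_zero

lemma Estar_mul_A_mul_Estar_eq_zero (S : TSetup X) {i j : ℕ} (hij : i + 1 < j) :
    S.Estar j * S.A * S.Estar i = 0 := by
  ext y z
  rw [Estar_eq_diagonal, Estar_eq_diagonal, Matrix.mul_diagonal, Matrix.diagonal_mul, S.hA]
  by_cases hyz : S.G.Adj y z
  · have hdist : S.G.dist S.x y ≤ S.G.dist S.x z + 1 :=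
      SimpleGraph.dist_eq_one_iff_adj.2 hyz.symm ▸ S.hGconn.dist_triangle
    have not_both : ¬ (S.G.dist S.x y = j ∧ S.G.dist S.x z = i) := by lia
    by_cases hy : S.G.dist S.x y = j <;> simp_all
  · simp [hyz]

lemma conjTranspose_E (S : TSetup X) (i : ℕ) : (S.E i)ᴴ = S.E i := by
  rw [Matrix.conjTranspose, S.hEsymm]
  exact S.hEreal i

lemma Astar_eq_diagonal (S : TSetup X) :
    S.Astar = Matrix.diagonal ((Fintype.card X : ℂ) • S.E 1 S.x) := by
  ext y z
  simp [S.hAstar, Matrix.diagonal_apply]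

lemma conjTranspose_Astar (S : TSetup X) : (S.Astar)ᴴ = S.Astar := by
  have star_row : star (S.E 1 S.x) = S.E 1 S.x := congrFun (S.hEreal 1) S.x
  rw [Astar_eq_diagonal, Matrix.diagonal_conjTranspose, star_smul, star_row, star_natCast]

lemma E_one_row_vecMul_hadamard (S : TSetup X) {i j : ℕ} (hi : i ≤ S.D) (hj : j ≤ S.D) :
    S.E 1 S.x ᵥ* (S.E i ⊙ S.E j) =
      ((Fintype.card X : ℂ)⁻¹ * S.q 1 i j) • S.E 1 S.x := by
  have row_mul : ∀ h, S.E 1 S.x ᵥ* S.E h = if 1 = h then S.E 1 S.x else 0 := by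
    intro h
    rw [← Matrix.mul_apply_eq_vecMul, S.orthogonalIdempotents_E.mul_eq]
    split_ifs <;> rfl
  have one_mem : 1 ∈ Finset.range (S.D + 1) := by grind [S.hD3]
  rw [S.hKrein i j hi hj, Matrix.vecMul_smul, Matrix.vecMul_sum]
  simp [Matrix.vecMul_smul, row_mul, one_mem, mul_smul]

lemma trace_Astar_mul_E_mul_Astar_mul_E (S : TSetup X) {i j : ℕ} (hi : i ≤ S.D) (hj : j ≤ S.D)
    (hq : S.q 1 i j = 0) : (S.Astar * S.E i * (S.Astar * S.E j)).trace = 0 := by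
  have transpose_mul : S.Astar * S.E j = (S.E j * S.Astar)ᵀ := by
    rw [Matrix.transpose_mul, S.hEsymm, Astar_eq_diagonal, Matrix.diagonal_transpose]
  rw [transpose_mul, Astar_eq_diagonal, ← Matrix.dotProduct_vecMul_hadamard, Matrix.smul_vecMul,
    S.E_one_row_vecMul_hadamard hi hj, hq]
  simp

open scoped ComplexOrder in
lemma E_mul_Astar_mul_E_eq_zero (S : TSetup X) {i j : ℕ} (hij : i + 1 < j) :
    S.E j * S.Astar * S.E i = 0 := by
  by_cases hj : j ≤ S.D
  · have hi : i ≤ S.D := by lia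
    have hq : S.q 1 i j = 0 := S.hQpoly0 1 i j (by grind [S.hD3]) hi hj (by lia)
    rw [← Matrix.trace_mul_conjTranspose_self_eq_zero_iff]
    calc (S.E j * S.Astar * S.E i * (S.E j * S.Astar * S.E i)ᴴ).trace
        = (S.E j * (S.Astar * (S.E i * S.E i) * (S.Astar * S.E j))).trace := by
          simp only [Matrix.conjTranspose_mul, conjTranspose_E, conjTranspose_Astar, mul_assoc]
      _ = (S.Astar * (S.E i * S.E i) * (S.Astar * (S.E j * S.E j))).trace := by
          rw [Matrix.trace_mul_comm, mul_assoc _ _ (S.E j), mul_assoc S.Astar (S.E j)]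
      _ = (S.Astar * S.E i * (S.Astar * S.E j)).trace := by
          rw [S.orthogonalIdempotents_E.mul_eq, S.orthogonalIdempotents_E.mul_eq, if_pos rfl,
            if_pos rfl]
      _ = 0 := S.trace_Astar_mul_E_mul_Astar_mul_E hi hj hq
  · rw [S.hEzero j (by lia), zero_mul, zero_mul]

lemma A_mem_T (S : TSetup X) : S.A ∈ S.T :=
  Algebra.subset_adjoin (Set.mem_insert _ _)

lemma Astar_mem_T (S : TSetup X) : S.Astar ∈ S.T :=
  Algebra.subset_adjoin (Set.mem_insert_of_mem _ rfl)

lemma injOn_θ (S : TSetup X) :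
    Set.InjOn (fun i ↦ (S.θ i : ℂ)) (Finset.range (S.D + 1)) := by
  intro i hi j hj hij
  rw [Finset.mem_coe, Finset.mem_range_succ_iff] at hi hj
  exact S.hθinj i j hi hj (Complex.ofReal_injective hij)

lemma injOn_θstar (S : TSetup X) :
    Set.InjOn (fun i ↦ (S.θstar i : ℂ)) (Finset.range (S.D + 1)) := by
  intro i hi j hj hij
  rw [Finset.mem_coe, Finset.mem_range_succ_iff] at hi hj
  exact S.hθstarinj i j hi hj (Complex.ofReal_injective hij)

lemma E_mem_T (S : TSetup X) (i : ℕ) : S.E i ∈ S.T := by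
  have h := mem_adjoin_sum_smul_of_orthogonalIdempotents S.orthogonalIdempotents_E S.hEsum
    S.injOn_θ i
  rw [← S.hAspec] at h
  exact Algebra.adjoin_mono (by simp) h

lemma Estar_mem_T (S : TSetup X) (i : ℕ) : S.Estar i ∈ S.T := by
  have h := mem_adjoin_sum_smul_of_orthogonalIdempotents S.orthogonalIdempotents_Estar S.sum_Estar
    S.injOn_θstar i
  rw [← S.hAstarspec] at h
  exact Algebra.adjoin_mono (by simp) h

lemma E_mul_A (S : TSetup X) (i : ℕ) : S.E i * S.A = (S.θ i : ℂ) • S.E i := by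
  by_cases hi : i ∈ Finset.range (S.D + 1)
  · rw [S.hAspec]
    exact mul_sum_smul_of_orthogonalIdempotents S.orthogonalIdempotents_E (fun i ↦ (S.θ i : ℂ)) hi
  · rw [eq_zero_of_sum_eq_one_of_notMem S.orthogonalIdempotents_E S.hEsum hi, zero_mul, smul_zero]

lemma isHessenberg_A_Estar (S : TSetup X) :
    IsHessenberg S.A.mulVecLin (fun i ↦ (S.Estar i).mulVecLin) (Finset.range (S.D + 1)) :=
  isHessenberg_mulVecLin S.orthogonalIdempotents_Estar S.sum_Estar
    fun _ _ ↦ S.Estar_mul_A_mul_Estar_eq_zero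

lemma isHessenberg_Astar_E (S : TSetup X) :
    IsHessenberg S.Astar.mulVecLin (fun i ↦ (S.E i).mulVecLin) (Finset.range (S.D + 1)) :=
  isHessenberg_mulVecLin S.orthogonalIdempotents_E S.hEsum
    fun _ _ ↦ S.E_mul_Astar_mul_E_eq_zero

lemma mem_invtSubmodule_of_mem_T (S : TSetup X) {U : Submodule ℂ (X → ℂ)}
    (hA : U ∈ Module.End.invtSubmodule S.A.mulVecLin)
    (hAstar : U ∈ Module.End.invtSubmodule S.Astar.mulVecLin)
    {B : Matrix X X ℂ} (hB : B ∈ S.T) : U ∈ Module.End.invtSubmodule B.mulVecLin := by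
  refine mem_invtSubmodule_of_mem_adjoin Matrix.toLinAlgEquiv'.toAlgHom ?_ hB
  rintro _ (rfl | rfl)
  exacts [hA, hAstar]

end TSetup

namespace TMod

variable {S : TSetup X} (M : TMod S)

lemma eq_bot_or_eq_of_mem_invtSubmodule {U : Submodule ℂ (X → ℂ)} (hU : U ≤ M.W)
    (hA : U ∈ Module.End.invtSubmodule S.A.mulVecLin)
    (hAstar : U ∈ Module.End.invtSubmodule S.Astar.mulVecLin) :
    U = ⊥ ∨ U = M.W :=
  M.hWirr U hU fun _ hB ↦ S.mem_invtSubmodule_of_mem_T hA hAstar hB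

lemma isThinIrreducible_A_Estar :
    IsThinIrreducible S.A.mulVecLin (fun i ↦ (S.Estar i).mulVecLin) M.W M.r M.d where
  mem_invtSubmodule := M.hWinv _ S.A_mem_T
  mem_invtSubmodule_proj i := M.hWinv _ (S.Estar_mem_T i)
  eq_bot_or_eq _ hU hA hEstar := M.eq_bot_or_eq_of_mem_invtSubmodule hU hA
    (S.hAstarspec ▸ mem_invtSubmodule_mulVecLin_sum_smul hEstar _ _)
  isPrincipal_map_proj i := (Submodule.finrank_le_one_iff_isPrincipal _).1 (M.hthin i)
  map_proj_ne_bot_iff := M.hr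

lemma isPrincipal_map_E (i : ℕ) : (M.W.map (S.E i).mulVecLin).IsPrincipal := by
  refine M.isThinIrreducible_A_Estar.isPrincipal_map_of_apply_eq_smul S.isHessenberg_A_Estar
    (c := (S.θ i : ℂ)) fun w ↦ ?_
  simp only [Matrix.mulVecLin_apply]
  rw [Matrix.mulVec_mulVec, S.E_mul_A, Matrix.smul_mulVec]

lemma isThinIrreducible_Astar_E :
    IsThinIrreducible S.Astar.mulVecLin (fun i ↦ (S.E i).mulVecLin) M.W M.t M.d where
  mem_invtSubmodule := M.hWinv _ S.Astar_mem_T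
  mem_invtSubmodule_proj i := M.hWinv _ (S.E_mem_T i)
  eq_bot_or_eq _ hU hAstar hE := M.eq_bot_or_eq_of_mem_invtSubmodule hU
    (S.hAspec ▸ mem_invtSubmodule_mulVecLin_sum_smul hE _ _) hAstar
  isPrincipal_map_proj := M.isPrincipal_map_E
  map_proj_ne_bot_iff := M.ht

end TMod

/-- For nonzero `v ∈ E*_r W`, each `E*_{r+i} A^i v` is nonzero (hence spans `E*_{r+i} W`)
and `{E*_{r+i} A^i v}_{i=0}^d` is a basis of `W`; dually for nonzero `u ∈ E_t W`. -/
theorem stmt3 (S : TSetup X) (M : TMod S) (hd : 0 < M.d) :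
    (∀ v ∈ M.W.map (S.Estar M.r).mulVecLin, v ≠ 0 →
      (∀ i ≤ M.d, S.Estar (M.r + i) *ᵥ (S.A ^ i *ᵥ v) ≠ 0 ∧
        Submodule.span ℂ {S.Estar (M.r + i) *ᵥ (S.A ^ i *ᵥ v)} =
          M.W.map (S.Estar (M.r + i)).mulVecLin) ∧
      LinearIndependent ℂ
        (fun i : Fin (M.d + 1) => S.Estar (M.r + i) *ᵥ (S.A ^ (i : ℕ) *ᵥ v)) ∧
      Submodule.span ℂ
        (Set.range fun i : Fin (M.d + 1) => S.Estar (M.r + i) *ᵥ (S.A ^ (i : ℕ) *ᵥ v)) = M.W) ∧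
    (∀ u ∈ M.W.map (S.E M.t).mulVecLin, u ≠ 0 →
      (∀ i ≤ M.d, S.E (M.t + i) *ᵥ (S.Astar ^ i *ᵥ u) ≠ 0 ∧
        Submodule.span ℂ {S.E (M.t + i) *ᵥ (S.Astar ^ i *ᵥ u)} =
          M.W.map (S.E (M.t + i)).mulVecLin) ∧
      LinearIndependent ℂ
        (fun i : Fin (M.d + 1) => S.E (M.t + i) *ᵥ (S.Astar ^ (i : ℕ) *ᵥ u)) ∧
      Submodule.span ℂ
        (Set.range fun i : Fin (M.d + 1) => S.E (M.t + i) *ᵥ (S.Astar ^ (i : ℕ) *ᵥ u)) = M.W) := by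
  exact ⟨fun _ hv hv0 ↦ M.isThinIrreducible_A_Estar.mulVec_basis S.isHessenberg_A_Estar hv hv0,
    fun _ hu hu0 ↦ M.isThinIrreducible_Astar_E.mulVec_basis S.isHessenberg_Astar_E hu hu0⟩
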